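/- For every nonnegative integer ℓ, nonnegative integer n, and complex number x such that no denominator vanishes: sum over k from 0 to n of ((3x)_k (2-ℓ-3x)_k (-n)_k)/(k! (3/2-ℓ)_k (-1-3n)_k) * (3/4)^k equals ((3x-1)_ℓ (3x-1/2)_ℓ)/((6x-1)_ℓ (-1/2)_ℓ) * sum over i from 0 to ℓ of ((3x+i-1)/(3x-1))^2 * ((-ℓ)_i (6x-2)_i)/(i! (6x+ℓ-1)_i) * (((2+i)/3 + x)_n ((4-i)/3 - x)_n)/((2/3)_n (4/3)_n). (A variant generalization of Gosper's second identity.) -/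

import Mathlib

/-- Pochhammer symbol (rising factorial) `(a)_k`. -/
noncomputable def poch (a : ℂ) (k : ℕ) : ℂ := ∏ j ∈ Finset.range k, (a + j)

theorem poch_zero (a : ℂ) : poch a 0 = 1 := by simp [poch]

theorem poch_succ (a : ℂ) (k : ℕ) : poch a (k + 1) = poch a k * (a + k) := by
  simp [poch, Finset.prod_range_succ]

theorem poch_succ_left (a : ℂ) (k : ℕ) : poch a (k + 1) = a * poch (a + 1) k := by
  rw [poch, Finset.prod_range_succ', mul_comm, poch]
  simp [add_comm, add_left_comm]

theorem poch_add (a : ℂ) (m k : ℕ) : poch a (m + k) = poch a m * poch (a + m) k := by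
  simp [poch, Finset.prod_range_add, add_assoc]

/-- Shifting the base of a rising factorial by one. -/
theorem mul_poch_add_one (a : ℂ) (k : ℕ) : a * poch (a + 1) k = poch a k * (a + k) := by
  rw [← poch_succ_left, poch_succ]

theorem poch_ne_zero_iff {a : ℂ} {k : ℕ} : poch a k ≠ 0 ↔ ∀ j < k, a + j ≠ 0 := by
  simp [poch, Finset.prod_ne_zero_iff]

theorem poch_neg_natCast_ne_zero {m k : ℕ} (h : k ≤ m) : poch (-(m : ℂ)) k ≠ 0 := by
  rw [poch_ne_zero_iff]
  intro j hj h0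
  have : (j : ℂ) = m := by linear_combination h0
  have := Nat.cast_injective this
  omega

theorem half_add_intCast_ne_zero (m : ℤ) : (1 / 2 + m : ℂ) ≠ 0 := by
  intro h
  have h' : ((1 + 2 * m : ℤ) : ℂ) = 0 := by
    push_cast
    linear_combination 2 * h
  have := Int.cast_eq_zero.mp h'
  omega

theorem poch_half_ne_zero (m : ℤ) (k : ℕ) : poch (1 / 2 + m) k ≠ 0 := by
  rw [poch_ne_zero_iff]
  intro j _
  have := half_add_intCast_ne_zero (m + j)
  push_cast at this
  rwa [add_assoc]

theorem poch_three_halves_ne_zero (k : ℕ) : poch (3 / 2) k ≠ 0 := by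
  have := poch_half_ne_zero 1 k
  norm_num at this ⊢
  exact this

/-- The part of the summand of Gosper's identity which does not depend on the order `n`. -/
noncomputable def gosperCoeff (y : ℂ) (k : ℕ) : ℂ :=
  poch (1 + y) k * poch (1 - y) k / ((Nat.factorial k : ℂ) * poch (3 / 2) k) * (3 / 4) ^ k

theorem gosperCoeff_succ (y : ℂ) (k : ℕ) :
    (k + 1) * (k + 3 / 2) * gosperCoeff y (k + 1) =
      3 / 4 * ((k + 1) ^ 2 - y ^ 2) * gosperCoeff y k := by
  have h1 : (Nat.factorial k : ℂ) ≠ 0 := by exact_mod_cast Nat.factorial_ne_zero k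
  have h2 := poch_three_halves_ne_zero k
  have h3 := poch_three_halves_ne_zero (k + 1)
  have h4 : (k + 1 : ℂ) ≠ 0 := by exact_mod_cast Nat.succ_ne_zero k
  rw [poch_succ] at h3
  have h5 := right_ne_zero_of_mul h3
  simp only [gosperCoeff, poch_succ, Nat.factorial_succ, pow_succ]
  rw [show (k + 3 / 2 : ℂ) = 3 / 2 + k by ring]
  generalize (3 / 2 + k : ℂ) = u at *
  push_cast
  field_simp
  ring

/-- The quotient in the telescoping certificate for Gosper's identity. -/
noncomputable def gosperRatio (n k : ℕ) : ℂ :=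
  poch (-(n : ℂ) - 1) k / ((n + 1) * poch (-1 - 3 * n) k)

theorem poch_neg_one_sub_ne_zero {n k : ℕ} (h : k ≤ 3 * n + 1) :
    poch (-1 - 3 * n : ℂ) k ≠ 0 := by
  have := poch_neg_natCast_ne_zero h
  push_cast at this
  rwa [show (-1 - 3 * n : ℂ) = -(3 * n + 1) by ring]

theorem neg_one_sub_add_ne_zero {n k : ℕ} (h : k ≤ 3 * n) : (-1 - 3 * n + k : ℂ) ≠ 0 :=
  poch_ne_zero_iff.mp (poch_neg_one_sub_ne_zero le_rfl) k (by omega)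

theorem gosperRatio_succ {n k : ℕ} (h : k ≤ 3 * n) :
    (k - 1 - 3 * n) * gosperRatio n (k + 1) = (k - n - 1) * gosperRatio n k := by
  have h1 := poch_neg_one_sub_ne_zero (n := n) (k := k) (by omega)
  have h2 := neg_one_sub_add_ne_zero h
  have h4 : (n + 1 : ℂ) ≠ 0 := by exact_mod_cast Nat.succ_ne_zero n
  simp only [gosperRatio, poch_succ]
  field_simp
  ring

theorem poch_div_poch_eq_gosperRatio (n k : ℕ) :
    poch (-(n : ℂ)) k / poch (-1 - 3 * n) k = (n + 1 - k) * gosperRatio n k := by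
  have h4 : (n + 1 : ℂ) ≠ 0 := by exact_mod_cast Nat.succ_ne_zero n
  have h := mul_poch_add_one (-(n : ℂ) - 1) k
  rw [sub_add_cancel] at h
  rw [gosperRatio, mul_div_assoc', mul_comm (n + 1 : ℂ), ← div_div, eq_div_iff h4,
    div_mul_eq_mul_div]
  congr 1
  linear_combination -h

theorem poch_succ_div_poch_eq_gosperRatio {n k : ℕ} (h : k ≤ 3 * n + 1) :
    3 * (3 * n + 2) * (3 * n + 4) *
        (poch (-((n + 1 : ℕ) : ℂ)) k / poch (-1 - 3 * ((n + 1 : ℕ) : ℂ)) k) =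
      (3 * n + 2 - k) * (3 * n + 3 - k) * (3 * n + 4 - k) * gosperRatio n k := by
  have h1 := poch_neg_one_sub_ne_zero h
  have h2 := poch_neg_one_sub_ne_zero (n := n + 1) (k := k) (by omega)
  have h4 : (n + 1 : ℂ) ≠ 0 := by exact_mod_cast Nat.succ_ne_zero n
  have e1 := mul_poch_add_one (-4 - 3 * n : ℂ) k
  have e2 := mul_poch_add_one (-3 - 3 * n : ℂ) k
  have e3 := mul_poch_add_one (-2 - 3 * n : ℂ) k
  rw [show (-4 - 3 * n + 1 : ℂ) = -3 - 3 * n by ring] at e1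
  rw [show (-3 - 3 * n + 1 : ℂ) = -2 - 3 * n by ring] at e2
  rw [show (-2 - 3 * n + 1 : ℂ) = -1 - 3 * n by ring] at e3
  have e4 : (-1 - 3 * ((n + 1 : ℕ) : ℂ)) = -4 - 3 * n := by push_cast; ring
  have e5 : (-((n + 1 : ℕ) : ℂ)) = -n - 1 := by push_cast; ring
  rw [e4] at h2 ⊢
  rw [e5, gosperRatio]
  have key : 3 * (3 * n + 2) * (3 * n + 4) * (n + 1) * poch (-1 - 3 * n : ℂ) k =
      (3 * n + 2 - k) * (3 * n + 3 - k) * (3 * n + 4 - k) * poch (-4 - 3 * n : ℂ) k := by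
    linear_combination -(3 * n + 3) * (3 * n + 4) * e3 - (3 * n + 4) * (3 * n + 2 - k) * e2
      - (3 * n + 2 - k) * (3 * n + 3 - k) * e1
  field_simp
  linear_combination poch (-n - 1 : ℂ) k * key

/-- The summand of Gosper's identity of order `n`. -/
noncomputable def gosperTerm (n : ℕ) (y : ℂ) (k : ℕ) : ℂ :=
  gosperCoeff y k * (poch (-(n : ℂ)) k / poch (-1 - 3 * n) k)

theorem sum_gosperTerm_telescope (n : ℕ) (y : ℂ) (m : ℕ) (hm : m ≤ n + 1) :
    ∑ k ∈ Finset.range m, ((3 * n + 2) * (3 * n + 4) * gosperTerm (n + 1) y k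
        - ((3 * n + 3) ^ 2 - y ^ 2) * gosperTerm n y k) =
      4 / 3 * m * (m + 1 / 2) * (m - 2 - 3 * n) * gosperCoeff y m * gosperRatio n m := by
  induction m with
  | zero => simp
  | succ m ih =>
    rw [Finset.sum_range_succ, ih (by omega)]
    have e1 := poch_succ_div_poch_eq_gosperRatio (n := n) (k := m) (by omega)
    have e2 := gosperCoeff_succ y m
    have e3 := gosperRatio_succ (n := n) (k := m) (by omega)
    rw [gosperTerm, gosperTerm, poch_div_poch_eq_gosperRatio n m]
    push_cast at e1 ⊢
    linear_combination gosperCoeff y m / 3 * e1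
      - 4 / 3 * (m - 1 - 3 * n) * gosperRatio n (m + 1) * e2
      - ((m + 1) ^ 2 - y ^ 2) * gosperCoeff y m * e3

theorem sum_gosperTerm_succ (n : ℕ) (y : ℂ) :
    (3 * n + 2) * (3 * n + 4) * ∑ k ∈ Finset.range (n + 2), gosperTerm (n + 1) y k =
      ((3 * n + 3) ^ 2 - y ^ 2) * ∑ k ∈ Finset.range (n + 1), gosperTerm n y k := by
  have h := sum_gosperTerm_telescope n y (n + 1) le_rfl
  rw [Finset.sum_sub_distrib, ← Finset.mul_sum, ← Finset.mul_sum] at h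
  rw [Finset.sum_range_succ, mul_add]
  have e1 := poch_succ_div_poch_eq_gosperRatio (n := n) (k := n + 1) (by omega)
  rw [gosperTerm]
  push_cast at e1 h ⊢
  linear_combination h + gosperCoeff y (n + 1) / 3 * e1

/-- Gosper's strange evaluation of a terminating `₃F₂` series at `3/4`. -/
theorem sum_gosperTerm (n : ℕ) (y : ℂ) :
    ∑ k ∈ Finset.range (n + 1), gosperTerm n y k =
      poch (1 + y / 3) n * poch (1 - y / 3) n / (poch (2 / 3) n * poch (4 / 3) n) := by
  induction n with
  | zero => simp [gosperTerm, gosperCoeff, poch_zero]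
  | succ n ih =>
    have h := sum_gosperTerm_succ n y
    have h2 : (3 * n + 2 : ℂ) ≠ 0 := by exact_mod_cast Nat.succ_ne_zero (3 * n + 1)
    have h4 : (3 * n + 4 : ℂ) ≠ 0 := by exact_mod_cast Nat.succ_ne_zero (3 * n + 3)
    rw [ih] at h
    rw [← mul_right_inj' (mul_ne_zero h2 h4), h]
    simp only [poch_succ]
    rw [show (2 / 3 + n : ℂ) = (3 * n + 2) / 3 by ring,
      show (4 / 3 + n : ℂ) = (3 * n + 4) / 3 by ring]
    generalize poch (2 / 3) n = p
    generalize poch (4 / 3) n = q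
    rw [mul_div_assoc', mul_div_assoc', show p * ((3 * n + 2) / 3) * (q * ((3 * n + 4) / 3)) =
      ((3 * n + 2) * (3 * n + 4)) * (p * q / 9) by ring, mul_div_mul_left _ _ (mul_ne_zero h2 h4)]
    ring

/-- Up to a constant, the divided difference of `φ (√z)` at the points `a ^ 2, …, (a + ℓ) ^ 2`. -/
noncomputable def sqDividedDiff (φ : ℂ → ℂ) (ℓ : ℕ) (a : ℂ) : ℂ :=
  ∑ i ∈ Finset.range (ℓ + 1),
    (-1) ^ i * (ℓ.choose i : ℂ) / poch (2 * a + i) (ℓ + 1) * (2 * (a + i) * φ (a + i))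

theorem sqDividedDiff_succ (φ : ℂ → ℂ) (ℓ : ℕ) (a : ℂ)
    (h : ∀ j ≤ 2 * (ℓ + 1), 2 * a + j ≠ 0) :
    (2 * a + ℓ + 1) * sqDividedDiff φ (ℓ + 1) a =
      sqDividedDiff φ ℓ a - sqDividedDiff φ ℓ (a + 1) := by
  have hp : ∀ i m : ℕ, i + m ≤ 2 * ℓ + 3 → poch (2 * a + i) m ≠ 0 := by
    intro i m him
    rw [poch_ne_zero_iff]
    intro j hj
    have := h (i + j) (by omega)
    push_cast at this
    rwa [add_assoc]
  have e : sqDividedDiff φ ℓ a = ∑ i ∈ Finset.range (ℓ + 1 + 1),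
      (-1) ^ i * (ℓ.choose i : ℂ) / poch (2 * a + i) (ℓ + 1) * (2 * (a + i) * φ (a + i)) := by
    rw [Finset.sum_range_succ, sqDividedDiff]
    simp
  rw [e, sqDividedDiff, sqDividedDiff, Finset.sum_range_succ', Finset.sum_range_succ' _ (ℓ + 1),
    mul_add, add_sub_right_comm, Finset.mul_sum, ← Finset.sum_sub_distrib]
  congr 1
  · refine Finset.sum_congr rfl fun j hj => ?_
    have hj' : j ≤ ℓ := by simpa [Nat.lt_succ_iff] using hj
    have h1 : poch (2 * a + (j + 1 : ℕ)) (ℓ + 1) ≠ 0 := hp _ _ (by omega)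
    have h2 : poch (2 * (a + 1) + j) (ℓ + 1) ≠ 0 := by
      have := hp (j + 2) (ℓ + 1) (by omega)
      push_cast at this
      rwa [show 2 * (a + 1) + j = 2 * a + (j + 2) by ring]
    have h3 : poch (2 * a + (j + 1 : ℕ)) (ℓ + 1 + 1) ≠ 0 := hp _ _ (by omega)
    have e1 := poch_succ (2 * a + (j + 1 : ℕ)) (ℓ + 1)
    have e2 := poch_succ_left (2 * a + (j + 1 : ℕ)) (ℓ + 1)
    rw [show 2 * a + ((j + 1 : ℕ) : ℂ) + 1 = 2 * (a + 1) + j by push_cast; ring] at e2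
    have hc : (j + 1 : ℂ) * (ℓ.choose (j + 1) : ℂ) = (ℓ - j) * ℓ.choose j := by
      have := Nat.choose_succ_right_eq ℓ j
      have h' : ((ℓ.choose (j + 1) * (j + 1) : ℕ) : ℂ) = ((ℓ.choose j * (ℓ - j) : ℕ) : ℂ) := by
        rw [this]
      rw [Nat.cast_mul, Nat.cast_mul, Nat.cast_sub hj'] at h'
      push_cast at h'
      linear_combination h'
    rw [show a + 1 + (j : ℂ) = a + (j + 1 : ℕ) by push_cast; ring, ← mul_assoc, ← sub_mul]
    congr 1
    rw [Nat.choose_succ_succ, div_sub_div _ _ h1 h2, mul_div_assoc', div_eq_div_iff h3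
      (mul_ne_zero h1 h2)]
    have hx : ∀ P Q R u v A B C s : ℂ, R = P * u → R = v * Q → C = A * u - B * v →
        C * (P * Q) = (A * Q - P * B) * R := by
      intro P Q R u v A B C s h1 h2 h3
      linear_combination P * Q * h3 - A * Q * h1 + P * B * h2
    refine hx _ _ _ _ _ _ _ _ 1 e1 e2 ?_
    push_cast
    linear_combination (-1) ^ j * hc
  · have h1 : poch (2 * a) (ℓ + 1) ≠ 0 := by simpa using hp 0 (ℓ + 1) (by omega)
    have h2 : 2 * a + (ℓ + 1) ≠ 0 := by simpa using h (ℓ + 1) (by omega)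
    simp only [Nat.cast_zero, add_zero, poch_succ _ (ℓ + 1), Nat.choose_zero_right]
    push_cast
    field_simp
    ring

theorem sqDividedDiff_poch (k ℓ : ℕ) (a : ℂ) (h : ∀ j ≤ 2 * ℓ, 2 * a + j ≠ 0) :
    sqDividedDiff (fun y => y * (poch (1 + y) k * poch (1 - y) k)) ℓ a =
      a * poch (-1 / 2) ℓ * poch (3 / 2) k / (poch (3 / 2 - ℓ) k * (poch a ℓ * poch (a + 1 / 2) ℓ))
        * (poch (1 + a) k * poch (1 - ℓ - a) k) := by
  induction ℓ generalizing a with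
  | zero =>
    have h0 : a ≠ 0 := by simpa using h 0 le_rfl
    have := poch_three_halves_ne_zero k
    simp [sqDividedDiff, poch_zero, poch_succ]
    field_simp
  | succ ℓ ih =>
    have hs : 2 * a + ℓ + 1 ≠ 0 := by
      have := h (ℓ + 1) (by omega)
      push_cast at this
      rwa [add_assoc]
    have hpa : ∀ m ≤ ℓ + 1, poch a m ≠ 0 := by
      intro m hm
      rw [poch_ne_zero_iff]
      intro j hj h0
      apply h (2 * j) (by omega)
      push_cast
      linear_combination 2 * h0
    have hpb : ∀ m ≤ ℓ + 1, poch (a + 1 / 2) m ≠ 0 := by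
      intro m hm
      rw [poch_ne_zero_iff]
      intro j hj h0
      apply h (2 * j + 1) (by omega)
      push_cast
      linear_combination 2 * h0
    rw [← mul_right_inj' hs, sqDividedDiff_succ _ _ _ h, ih a (fun j hj => h j (by omega)),
      ih (a + 1) (fun j hj => by
        have := h (j + 2) (by omega)
        push_cast at this
        rwa [show 2 * (a + 1) + j = 2 * a + (j + 2) by ring])]
    have ha : a ≠ 0 := by simpa [poch_succ, poch_zero] using hpa 1 (by omega)
    have ha1 : a + 1 ≠ 0 := by
      have := h 2 (by omega)
      intro h0
      apply this
      push_cast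
      linear_combination 2 * h0
    have haℓ : a + ℓ ≠ 0 := poch_ne_zero_iff.mp (hpa (ℓ + 1) le_rfl) ℓ (by omega)
    have hb : a + 1 / 2 ≠ 0 := by simpa [poch_succ, poch_zero] using hpb 1 (by omega)
    have hbℓ : a + 1 / 2 + ℓ ≠ 0 := poch_ne_zero_iff.mp (hpb (ℓ + 1) le_rfl) ℓ (by omega)
    have hc : poch (3 / 2 - ℓ) k ≠ 0 := by
      have := poch_half_ne_zero (1 - ℓ) k
      push_cast at this
      rwa [show (3 / 2 - ℓ : ℂ) = 1 / 2 + (1 - ℓ) by ring]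
    have hc1 : (1 / 2 - ℓ : ℂ) ≠ 0 := by
      have := half_add_intCast_ne_zero (-ℓ)
      push_cast at this
      rwa [sub_eq_add_neg]
    have hck : (1 / 2 - ℓ + k : ℂ) ≠ 0 := by
      have := half_add_intCast_ne_zero (-ℓ + k)
      push_cast at this
      rwa [sub_eq_add_neg, add_assoc]
    have c1 : poch (1 / 2 - ℓ : ℂ) k = (1 / 2 - ℓ) * poch (3 / 2 - ℓ) k / (1 / 2 - ℓ + k) := by
      rw [eq_div_iff hck, ← mul_poch_add_one]
      ring_nf
    have c2 : poch (a + 1) ℓ = poch a ℓ * (a + ℓ) / a := by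
      rw [eq_div_iff ha, ← mul_poch_add_one]
      ring
    have c3 : poch (a + 1 + 1 / 2) ℓ = poch (a + 1 / 2) ℓ * (a + 1 / 2 + ℓ) / (a + 1 / 2) := by
      rw [eq_div_iff hb, ← mul_poch_add_one]
      ring_nf
    have c4 : poch (1 + (a + 1)) k = poch (1 + a) k * (1 + a + k) / (a + 1) := by
      rw [eq_div_iff ha1, ← mul_poch_add_one]
      ring_nf
    have c5 : poch (1 - ℓ - a) k = poch (-ℓ - a) k * (-ℓ - a + k) / (-(a + ℓ)) := by
      rw [eq_div_iff (neg_ne_zero.mpr haℓ), ← mul_poch_add_one]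
      ring_nf
    rw [show (1 - ℓ - (a + 1) : ℂ) = -ℓ - a by ring,
      show (1 - ((ℓ + 1 : ℕ) : ℂ) - a : ℂ) = -ℓ - a by push_cast; ring,
      show (3 / 2 - ((ℓ + 1 : ℕ) : ℂ)) = 1 / 2 - ℓ by push_cast; ring,
      c1, c2, c3, c4, c5, poch_succ, poch_succ, poch_succ]
    have d1 := hpa ℓ (by omega)
    have d2 := hpb ℓ (by omega)
    generalize poch a ℓ = A at *
    generalize poch (a + 1 / 2) ℓ = B at *
    generalize poch (3 / 2 - ℓ) k = C at *
    generalize poch (-ℓ - a) k = D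
    generalize poch (1 + a) k = E
    generalize poch (3 / 2) k = G
    generalize poch (-1 / 2) ℓ = H
    rw [show (-1 / 2 + ℓ : ℂ) = -(1 / 2 - ℓ) by ring]
    obtain ⟨b, hb_def⟩ : ∃ b, b = a + 1 / 2 := ⟨_, rfl⟩
    obtain ⟨v, hv_def⟩ : ∃ v, v = b + ℓ := ⟨_, rfl⟩
    obtain ⟨c, hc_def⟩ : ∃ c : ℂ, c = 1 / 2 - ℓ := ⟨_, rfl⟩
    obtain ⟨d, hd_def⟩ : ∃ d : ℂ, d = c + k := ⟨_, rfl⟩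
    rw [← hb_def, ← hv_def] at hbℓ
    rw [← hc_def, ← hd_def] at hck
    rw [← hb_def] at hb
    rw [← hc_def] at hc1
    rw [← hb_def, ← hv_def, ← hc_def, ← hd_def]
    field_simp
    simp only [hd_def, hv_def, hc_def, hb_def]
    ring

theorem poch_neg_natCast_div_factorial {ℓ i : ℕ} :
    poch (-(ℓ : ℂ)) i / (Nat.factorial i : ℂ) = (-1) ^ i * (ℓ.choose i : ℂ) := by
  have h1 : (Nat.factorial i : ℂ) ≠ 0 := by exact_mod_cast Nat.factorial_ne_zero i
  rw [div_eq_iff h1, mul_assoc, ← Nat.cast_mul, mul_comm (ℓ.choose i),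
    ← Nat.descFactorial_eq_factorial_mul_choose]
  induction i with
  | zero => simp [poch_zero]
  | succ i ih =>
    rw [poch_succ, ih (by exact_mod_cast Nat.factorial_ne_zero i), Nat.descFactorial_succ]
    rcases le_or_gt i ℓ with h | h
    · rw [Nat.cast_mul, Nat.cast_sub h]
      ring
    · simp [Nat.descFactorial_of_lt h]

theorem poch_two_mul (a : ℂ) (ℓ : ℕ) :
    poch (2 * a) (2 * ℓ) = 4 ^ ℓ * (poch a ℓ * poch (a + 1 / 2) ℓ) := by
  induction ℓ with
  | zero => simp [poch_zero]
  | succ ℓ ih =>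
    rw [mul_add_one, poch_succ, poch_succ, ih, poch_succ, poch_succ]
    push_cast
    ring

/-- Each coefficient of the left-hand series is a very-well-poised finite sum. -/
theorem poch_mul_poch_div_eq_sum (ℓ k : ℕ) (a : ℂ) (h : ∀ j ≤ 2 * ℓ, 2 * a + j ≠ 0) :
    poch (1 + a) k * poch (1 - ℓ - a) k / poch (3 / 2 - ℓ) k =
      (poch a ℓ * poch (a + 1 / 2) ℓ) / (poch (2 * a + 1) ℓ * poch (-1 / 2) ℓ) *
        ∑ i ∈ Finset.range (ℓ + 1),
          ((a + i) / a) ^ 2 * (poch (-(ℓ : ℂ)) i * poch (2 * a) i) /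
            ((Nat.factorial i : ℂ) * poch (2 * a + ℓ + 1) i) *
            (poch (1 + (a + i)) k * poch (1 - (a + i)) k / poch (3 / 2) k) := by
  have ha : a ≠ 0 := by simpa using h 0 (by omega)
  have hp : ∀ i m : ℕ, i + m ≤ 2 * ℓ + 1 → poch (2 * a + i) m ≠ 0 := by
    intro i m him
    rw [poch_ne_zero_iff]
    intro j hj
    have := h (i + j) (by omega)
    push_cast at this
    rwa [add_assoc]
  have h3 := poch_three_halves_ne_zero k
  have hc : poch (3 / 2 - ℓ) k ≠ 0 := by
    have := poch_half_ne_zero (1 - ℓ) k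
    push_cast at this
    rwa [show (3 / 2 - ℓ : ℂ) = 1 / 2 + (1 - ℓ) by ring]
  have hm : poch (-1 / 2) ℓ ≠ 0 := by
    have := poch_half_ne_zero (-1) ℓ
    norm_num at this ⊢
    exact this
  have h1 : poch (2 * a + 1) ℓ ≠ 0 := by simpa using hp 1 ℓ (by omega)
  have hab : poch a ℓ * poch (a + 1 / 2) ℓ ≠ 0 := by
    have h0 : poch (2 * a) (2 * ℓ) ≠ 0 := by simpa using hp 0 (2 * ℓ) (by omega)
    rw [poch_two_mul] at h0
    exact right_ne_zero_of_mul h0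
  have hsum : ∑ i ∈ Finset.range (ℓ + 1),
          ((a + i) / a) ^ 2 * (poch (-(ℓ : ℂ)) i * poch (2 * a) i) /
            ((Nat.factorial i : ℂ) * poch (2 * a + ℓ + 1) i) *
            (poch (1 + (a + i)) k * poch (1 - (a + i)) k / poch (3 / 2) k) =
      poch (2 * a + 1) ℓ / (a * poch (3 / 2) k) *
        sqDividedDiff (fun y => y * (poch (1 + y) k * poch (1 - y) k)) ℓ a := by
    rw [sqDividedDiff, Finset.mul_sum]
    refine Finset.sum_congr rfl fun i hi => ?_
    have hi' : i ≤ ℓ := by simpa [Nat.lt_succ_iff] using hi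
    rw [← poch_neg_natCast_div_factorial]
    have n1 : poch (2 * a + i) (ℓ + 1) ≠ 0 := hp _ _ (by omega)
    have n2 : poch (2 * a + ℓ + 1) i ≠ 0 := by
      have := hp (ℓ + 1) i (by omega)
      push_cast at this
      rwa [add_assoc]
    have n3 : (Nat.factorial i : ℂ) ≠ 0 := by exact_mod_cast Nat.factorial_ne_zero i
    have e1 := poch_add (2 * a) i (ℓ + 1)
    rw [add_comm i, poch_add, poch_succ_left] at e1
    push_cast at e1
    rw [← add_assoc] at e1
    generalize poch (2 * a + i) (ℓ + 1) = p at *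
    generalize poch (2 * a + ℓ + 1) i = q at *
    generalize poch (2 * a) i = r at *
    generalize poch (2 * a + 1) ℓ = s at *
    field_simp
    linear_combination -(a + i) ^ 2 * poch (-ℓ) i * poch (1 + (a + i)) k *
      poch (1 - (a + i)) k * e1
  rw [hsum, sqDividedDiff_poch k ℓ a h]
  generalize poch (3 / 2 - ℓ) k = p at *
  generalize poch (2 * a + 1) ℓ = q at *
  generalize poch a ℓ * poch (a + 1 / 2) ℓ = r at *
  generalize poch (-1 / 2) ℓ = s at *
  generalize poch (3 / 2) k = t at *
  field_simp

theorem gosper_second_variant_extension (ℓ n : ℕ) (x : ℂ)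
    (h3x : 3*x - 1 ≠ 0) (h6xℓ : poch (6*x - 1) ℓ ≠ 0) (hhalf : poch (-1/2) ℓ ≠ 0)
    (hdeni : ∀ i ≤ ℓ, poch (6*x + ℓ - 1) i ≠ 0)
    (hden : ∀ k ≤ n, poch (3/2 - ℓ) k ≠ 0 ∧ poch (-1 - 3*n : ℂ) k ≠ 0)
    (h23 : poch (2/3) n ≠ 0) (h43 : poch (4/3) n ≠ 0) :
    ∑ k ∈ Finset.range (n+1),
      (poch (3*x) k * poch (2 - ℓ - 3*x) k * poch (-(n : ℂ)) k) /
        ((Nat.factorial k : ℂ) * poch (3/2 - ℓ) k * poch (-1 - 3*n : ℂ) k) * (3/4 : ℂ)^k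
      = (poch (3*x - 1) ℓ * poch (3*x - 1/2) ℓ) / (poch (6*x - 1) ℓ * poch (-1/2) ℓ) *
        ∑ i ∈ Finset.range (ℓ+1),
          ((3*x + i - 1) / (3*x - 1))^2 *
            (poch (-(ℓ : ℂ)) i * poch (6*x - 2) i) /
            ((Nat.factorial i : ℂ) * poch (6*x + ℓ - 1) i) *
            ((poch ((2 + i)/3 + x) n * poch ((4 - i)/3 - x) n) /
              (poch (2/3) n * poch (4/3) n)) := by
  obtain ⟨a, rfl⟩ : ∃ a, x = (a + 1) / 3 := ⟨3 * x - 1, by ring⟩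
  have e0 : 3 * ((a + 1) / 3) = a + 1 := by ring
  have e1 : 6 * ((a + 1) / 3) = 2 * a + 2 := by ring
  rw [e0, add_sub_cancel_right] at h3x
  have h : ∀ j ≤ 2 * ℓ, 2 * a + j ≠ 0 := by
    rw [e1] at h6xℓ hdeni
    have hd := hdeni ℓ le_rfl
    rw [poch_ne_zero_iff] at h6xℓ hd
    intro j hj h0
    rcases j with _ | j
    · exact h3x (by simpa using h0)
    · push_cast at h0
      rcases lt_or_ge j ℓ with hjℓ | hjℓ
      · exact h6xℓ j hjℓ (by linear_combination h0)
      · refine hd (j - ℓ) (by omega) ?_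
        rw [Nat.cast_sub hjℓ]
        linear_combination h0
  have hl : ∀ k, (poch (3 * ((a + 1) / 3)) k * poch (2 - ℓ - 3 * ((a + 1) / 3)) k *
        poch (-(n : ℂ)) k) / ((Nat.factorial k : ℂ) * poch (3 / 2 - ℓ) k * poch (-1 - 3 * n : ℂ) k) *
        (3 / 4 : ℂ) ^ k =
      poch (1 + a) k * poch (1 - ℓ - a) k / poch (3 / 2 - ℓ) k *
        (poch (-(n : ℂ)) k / ((Nat.factorial k : ℂ) * poch (-1 - 3 * n : ℂ) k) *
          (3 / 4 : ℂ) ^ k) := by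
    intro k
    rw [e0, add_comm a 1, show (2 - ℓ - (1 + a) : ℂ) = 1 - ℓ - a by ring]
    generalize poch (-1 - 3 * n : ℂ) k = p
    generalize poch (3 / 2 - ℓ : ℂ) k = q
    ring
  have hr : ∀ i : ℕ, poch ((2 + i) / 3 + (a + 1) / 3) n * poch ((4 - i) / 3 - (a + 1) / 3) n /
        (poch (2 / 3) n * poch (4 / 3) n) =
      ∑ k ∈ Finset.range (n + 1), gosperTerm n (a + i) k := by
    intro i
    rw [sum_gosperTerm, show (2 + i : ℂ) / 3 + (a + 1) / 3 = 1 + (a + i) / 3 by ring,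
      show (4 - i : ℂ) / 3 - (a + 1) / 3 = 1 - (a + i) / 3 by ring]
  simp only [hl, hr, poch_mul_poch_div_eq_sum ℓ _ a h]
  rw [e0, e1, add_sub_cancel_right, show 2 * a + 2 - 1 = 2 * a + 1 by ring,
    show a + 1 - 1 / 2 = a + 1 / 2 by ring, add_sub_cancel_right,
    show 2 * a + 2 + ℓ - 1 = 2 * a + ℓ + 1 by ring]
  simp only [Finset.sum_mul, Finset.mul_sum]
  rw [Finset.sum_comm]
  refine Finset.sum_congr rfl fun i _ => Finset.sum_congr rfl fun k _ => ?_
  rw [gosperTerm, gosperCoeff, show a + 1 + i - 1 = a + i by ring]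
  generalize poch (-1 - 3 * n : ℂ) k = p
  generalize poch (3 / 2 : ℂ) k = q
  generalize poch (2 * a + ℓ + 1) i = r
  ring
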